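/- The extended total energy E : ℝ × ℝ^d × ℝ → [0,∞], defined by E(ρ,m,S) = |m|²/(2ρ) + c_v · ρ^γ · exp(S/(c_v ρ)) if ρ > 0, E(ρ,m,S) = 0 if ρ = 0, m = 0 and S ≤ 0, and E(ρ,m,S) = +∞ otherwise, is a convex and lower semicontinuous function on ℝ^{d+2}. -/

import Mathlib

/-!
The energy is the sum of a kinetic part `|m|²/(2ρ)` and an internal part
`k⁻¹ ρ exp (k (log ρ + S/ρ))`, where `k = γ - 1`. Each part is a supremum of positive parts of
affine functions, and such suprema, as well as their sums, are convex and lower semicontinuous.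
The affine functions come from three tangent inequalities for `ρ > 0`:
* `|m|²/(2ρ) ≥ ⟪v, m⟫ - ρ |v|²/2`, with equality at `v = m/ρ`;
* `ρ exp (k w) ≥ exp (k t) ρ (1 + k (w - t))`, with equality at `t = w`;
* `ρ log ρ ≥ ρ (1 + u) - exp u`, with equality at `u = log ρ`.
At `ρ ≤ 0` the affine functions are nonpositive on the effective domain and unbounded above off it,
so the suprema also reproduce the boundary values `0` and `∞`.
-/

open Classical

open scoped ENNReal

/-- The extended total energy `E(ρ, m, S)` of the Euler system, with values in `[0, ∞]`;
here `γ` is the adiabatic exponent and `c_v = 1/(γ-1)`. -/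
noncomputable def totalEnergy (d : ℕ) (γ : ℝ) (p : ℝ × EuclideanSpace ℝ (Fin d) × ℝ) : ℝ≥0∞ :=
  if 0 < p.1 then
    ENNReal.ofReal (‖p.2.1‖ ^ 2 / (2 * p.1) +
      (1 / (γ - 1)) * p.1 ^ γ * Real.exp (p.2.2 / ((1 / (γ - 1)) * p.1)))
  else if p.1 = 0 ∧ p.2.1 = 0 ∧ p.2.2 ≤ 0 then 0
  else ⊤

open Set
open scoped NNReal

section ExtendedValued

variable {ι : Type*} {E : Type*}

lemma iSup_ofReal_eq_of_isGreatest {f : ι → ℝ} {a : ℝ} (ha : IsGreatest (range f) a) :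
    ⨆ i, ENNReal.ofReal (f i) = ENNReal.ofReal a := by
  refine IsLUB.iSup_eq ?_
  have himage := (ENNReal.ofReal_mono.map_isGreatest ha).isLUB
  rwa [← range_comp] at himage

lemma iSup_ofReal_eq_zero {f : ι → ℝ} (hf : ∀ i, f i ≤ 0) :
    ⨆ i, ENNReal.ofReal (f i) = 0 := by
  simpa only [ENNReal.iSup_eq_zero, ENNReal.ofReal_eq_zero] using hf

lemma iSup_ofReal_eq_top {f : ι → ℝ} (hf : ∀ N, ∃ i, N ≤ f i) :
    ⨆ i, ENNReal.ofReal (f i) = ⊤ := by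
  refine ENNReal.eq_top_of_forall_nnreal_le fun N => ?_
  obtain ⟨i, hi⟩ := hf N
  exact le_iSup_of_le i (by simpa only [ENNReal.ofReal_coe_nnreal] using ENNReal.ofReal_mono hi)

lemma convexOn_iSup_ofReal [AddCommMonoid E] [Module ℝ E] {f : ι → E → ℝ}
    (hf : ∀ i, ConvexOn ℝ univ (f i)) :
    ConvexOn ℝ≥0 univ fun x => ⨆ i, ENNReal.ofReal (f i x) := by
  refine ⟨convex_univ, fun x _ y _ a b _ _ hab => iSup_le fun i => ?_⟩
  have hconv : f i (a • x + b • y) ≤ a * f i x + b * f i y :=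
    (hf i).2 (mem_univ x) (mem_univ y) a.2 b.2 (by exact_mod_cast hab)
  calc ENNReal.ofReal (f i (a • x + b • y))
      ≤ ENNReal.ofReal (a * f i x) + ENNReal.ofReal (b * f i y) :=
        (ENNReal.ofReal_mono hconv).trans ENNReal.ofReal_add_le
    _ = a • ENNReal.ofReal (f i x) + b • ENNReal.ofReal (f i y) := by
        simp only [ENNReal.ofReal_mul a.coe_nonneg, ENNReal.ofReal_mul b.coe_nonneg,
          ENNReal.ofReal_coe_nnreal, ENNReal.smul_def, smul_eq_mul]
    _ ≤ a • (⨆ j, ENNReal.ofReal (f j x)) + b • ⨆ j, ENNReal.ofReal (f j y) := by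
        gcongr
        · exact le_iSup (fun j => ENNReal.ofReal (f j x)) i
        · exact le_iSup (fun j => ENNReal.ofReal (f j y)) i

lemma le_ofReal_mul_add_of_convexOn [AddCommMonoid E] [Module ℝ E] {f : E → ℝ≥0∞}
    (hf : ConvexOn ℝ≥0 univ f) (x y : E) {a : ℝ} (ha₀ : 0 ≤ a) (ha₁ : a ≤ 1) :
    f (a • x + (1 - a) • y) ≤ ENNReal.ofReal a * f x + ENNReal.ofReal (1 - a) * f y := by
  lift a to ℝ≥0 using ha₀
  obtain ⟨b, hb⟩ : ∃ b : ℝ≥0, (b : ℝ) = 1 - a := ⟨⟨1 - a, sub_nonneg.2 ha₁⟩, rfl⟩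
  have hab : a + b = 1 := NNReal.eq (by rw [NNReal.coe_add, hb, add_sub_cancel, NNReal.coe_one])
  rw [← hb, ENNReal.ofReal_coe_nnreal, ENNReal.ofReal_coe_nnreal]
  exact hf.2 (mem_univ x) (mem_univ y) zero_le zero_le hab

lemma lowerSemicontinuous_iSup_ofReal [TopologicalSpace E] {f : ι → E → ℝ}
    (hf : ∀ i, Continuous (f i)) :
    LowerSemicontinuous fun x => ⨆ i, ENNReal.ofReal (f i x) :=
  lowerSemicontinuous_iSup fun i =>
    (ENNReal.continuous_ofReal.comp (hf i)).lowerSemicontinuous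

end ExtendedValued

section KineticEnergy

variable {H : Type*} [NormedAddCommGroup H] [InnerProductSpace ℝ H]

/-- The extended kinetic energy `|m|²/(2ρ)` of a density-momentum pair `(ρ, m)`, equal to `0` at the
vacuum `(0, 0)` and to `∞` wherever else `ρ ≤ 0`. -/
noncomputable def kineticEnergy (p : ℝ × H) : ℝ≥0∞ :=
  if 0 < p.1 then ENNReal.ofReal (‖p.2‖ ^ 2 / (2 * p.1))
  else if p.1 = 0 ∧ p.2 = 0 then 0
  else ⊤

/-- The linear minorant of the kinetic energy with velocity `q.1`. The summand `q.2 ≥ 0`, which is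
`0` for a tangent, makes the family unbounded at every `ρ < 0` even if `H = {0}`. -/
noncomputable def kineticMinorant (q : H × ℝ≥0) (p : ℝ × H) : ℝ :=
  inner ℝ q.1 p.2 - p.1 * (‖q.1‖ ^ 2 / 2 + q.2)

lemma convexOn_kineticMinorant (q : H × ℝ≥0) : ConvexOn ℝ univ (kineticMinorant q) := by
  refine ⟨convex_univ, fun x _ y _ a b _ _ _ => le_of_eq ?_⟩
  simp only [kineticMinorant, Prod.fst_add, Prod.snd_add, Prod.smul_fst, Prod.smul_snd,
    inner_add_right, real_inner_smul_right, smul_eq_mul]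
  ring

lemma continuous_kineticMinorant (q : H × ℝ≥0) : Continuous (kineticMinorant q) := by
  unfold kineticMinorant
  fun_prop

lemma inner_sub_mul_norm_sq_le {ρ : ℝ} (hρ : 0 < ρ) (v m : H) :
    inner ℝ v m - ρ * (‖v‖ ^ 2 / 2) ≤ ‖m‖ ^ 2 / (2 * ρ) := by
  have hsq : ‖m - ρ • v‖ ^ 2 = ‖m‖ ^ 2 - 2 * (ρ * inner ℝ v m) + ρ ^ 2 * ‖v‖ ^ 2 := by
    rw [norm_sub_sq_real, real_inner_smul_right, real_inner_comm, norm_smul, mul_pow,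
      Real.norm_eq_abs, sq_abs]
  rw [le_div_iff₀ (by positivity)]
  linarith [sq_nonneg ‖m - ρ • v‖]

lemma isGreatest_range_kineticMinorant {ρ : ℝ} (hρ : 0 < ρ) (m : H) :
    IsGreatest (range fun q => kineticMinorant q (ρ, m)) (‖m‖ ^ 2 / (2 * ρ)) := by
  constructor
  · refine ⟨(ρ⁻¹ • m, 0), ?_⟩
    simp only [kineticMinorant, real_inner_smul_left, real_inner_self_eq_norm_sq, norm_smul,
      mul_pow, Real.norm_eq_abs, sq_abs, NNReal.coe_zero]
    field_simp
    ring
  · rintro _ ⟨⟨v, s⟩, rfl⟩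
    have hs : 0 ≤ ρ * s := by positivity
    have htangent := inner_sub_mul_norm_sq_le hρ v m
    simp only [kineticMinorant]
    linarith

lemma exists_le_kineticMinorant {ρ : ℝ} {m : H} (hρ : ρ ≤ 0) (hne : ¬(ρ = 0 ∧ m = 0)) (N : ℝ) :
    ∃ q, N ≤ kineticMinorant q (ρ, m) := by
  rcases hρ.lt_or_eq with hneg | rfl
  · refine ⟨(0, (N / -ρ).toNNReal), ?_⟩
    have hs : N ≤ (N / -ρ).toNNReal * -ρ :=
      (div_le_iff₀ (neg_pos.2 hneg)).1 (Real.le_coe_toNNReal _)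
    simp only [kineticMinorant, inner_zero_left, norm_zero]
    linarith
  · have hm : ‖m‖ ^ 2 ≠ 0 := by simpa using hne
    refine ⟨((N / ‖m‖ ^ 2) • m, 0), le_of_eq ?_⟩
    simp only [kineticMinorant, real_inner_smul_left, real_inner_self_eq_norm_sq,
      div_mul_cancel₀ N hm, zero_mul, sub_zero]

lemma kineticEnergy_eq_iSup :
    (kineticEnergy : ℝ × H → ℝ≥0∞) = fun p => ⨆ q, ENNReal.ofReal (kineticMinorant q p) := by
  funext ⟨ρ, m⟩
  simp only [kineticEnergy]
  split_ifs with hpos hvacuum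
  · exact (iSup_ofReal_eq_of_isGreatest (isGreatest_range_kineticMinorant hpos m)).symm
  · obtain ⟨rfl, rfl⟩ := hvacuum
    refine (iSup_ofReal_eq_zero fun q => le_of_eq ?_).symm
    simp only [kineticMinorant, inner_zero_right, zero_mul, sub_zero]
  · exact (iSup_ofReal_eq_top (exists_le_kineticMinorant (not_lt.1 hpos) hvacuum)).symm

lemma convexOn_kineticEnergy : ConvexOn ℝ≥0 univ (kineticEnergy : ℝ × H → ℝ≥0∞) := by
  rw [kineticEnergy_eq_iSup]
  exact convexOn_iSup_ofReal convexOn_kineticMinorant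

lemma lowerSemicontinuous_kineticEnergy :
    LowerSemicontinuous (kineticEnergy : ℝ × H → ℝ≥0∞) := by
  rw [kineticEnergy_eq_iSup]
  exact lowerSemicontinuous_iSup_ofReal continuous_kineticMinorant

end KineticEnergy

section InternalEnergy

/-- The extended internal energy `c_v ρ^γ exp (S/(c_v ρ))` of a density-entropy pair `(ρ, S)`, where
`c_v = 1/(γ-1)`, equal to `0` if `ρ = 0` and `S ≤ 0`, and to `∞` wherever else `ρ ≤ 0`. -/
noncomputable def internalEnergy (γ : ℝ) (p : ℝ × ℝ) : ℝ≥0∞ :=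
  if 0 < p.1 then
    ENNReal.ofReal ((1 / (γ - 1)) * p.1 ^ γ * Real.exp (p.2 / ((1 / (γ - 1)) * p.1)))
  else if p.1 = 0 ∧ p.2 ≤ 0 then 0
  else ⊤

/-- The affine minorant of the internal energy of adiabatic exponent `k + 1`, tangent to it where
`log ρ + S/ρ = q.1` and `log ρ = q.2`. -/
noncomputable def internalMinorant (k : ℝ) (q : ℝ × ℝ) (p : ℝ × ℝ) : ℝ :=
  1 / k * Real.exp (k * q.1) *
    (p.1 * (1 - k * q.1) + k * (p.2 + (p.1 * (1 + q.2) - Real.exp q.2)))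

lemma convexOn_internalMinorant (k : ℝ) (q : ℝ × ℝ) :
    ConvexOn ℝ univ (internalMinorant k q) := by
  refine ⟨convex_univ, fun x _ y _ a b _ _ hab => le_of_eq ?_⟩
  obtain rfl : b = 1 - a := by linarith
  simp only [internalMinorant, Prod.fst_add, Prod.snd_add, Prod.smul_fst, Prod.smul_snd,
    smul_eq_mul]
  ring

lemma continuous_internalMinorant (k : ℝ) (q : ℝ × ℝ) : Continuous (internalMinorant k q) := by
  unfold internalMinorant
  fun_prop

lemma exp_mul_one_add_sub_le_exp (x y : ℝ) : Real.exp x * (1 + (y - x)) ≤ Real.exp y := by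
  calc Real.exp x * (1 + (y - x)) ≤ Real.exp x * Real.exp (y - x) := by
        gcongr
        linarith [Real.add_one_le_exp (y - x)]
    _ = Real.exp y := by rw [← Real.exp_add, add_sub_cancel]

lemma mul_one_add_sub_exp_le_mul_log {ρ : ℝ} (hρ : 0 < ρ) (u : ℝ) :
    ρ * (1 + u) - Real.exp u ≤ ρ * Real.log ρ := by
  have htangent := exp_mul_one_add_sub_le_exp (Real.log ρ) u
  rw [Real.exp_log hρ] at htangent
  linarith

lemma rpow_mul_exp_div_eq {k ρ : ℝ} (hρ : 0 < ρ) (S : ℝ) :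
    ρ ^ (k + 1) * Real.exp (S / (1 / k * ρ)) = ρ * Real.exp (k * (Real.log ρ + S / ρ)) := by
  have hpow : ρ ^ k = Real.exp (k * Real.log ρ) := by rw [Real.rpow_def_of_pos hρ, mul_comm]
  have hdiv : S / (1 / k * ρ) = k * (S / ρ) := by
    rw [one_div, div_mul_eq_div_div, div_inv_eq_mul, mul_div_right_comm, mul_comm]
  rw [Real.rpow_add_one hρ.ne', hpow, hdiv, mul_add, Real.exp_add]
  ring

lemma internalMinorant_le {k ρ : ℝ} (hk : 0 < k) (hρ : 0 < ρ) (q : ℝ × ℝ) (S : ℝ) :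
    internalMinorant k q (ρ, S) ≤ 1 / k * (ρ * Real.exp (k * (Real.log ρ + S / ρ))) := by
  obtain ⟨t, u⟩ := q
  set w := Real.log ρ + S / ρ with hw
  have hentropy : S + (ρ * (1 + u) - Real.exp u) ≤ ρ * w :=
    calc S + (ρ * (1 + u) - Real.exp u) ≤ S + ρ * Real.log ρ := by
          gcongr
          exact mul_one_add_sub_exp_le_mul_log hρ u
      _ = ρ * w := by rw [hw, mul_add, mul_div_cancel₀ S hρ.ne', add_comm]
  calc internalMinorant k (t, u) (ρ, S)
      ≤ 1 / k * Real.exp (k * t) * (ρ * (1 - k * t) + k * (ρ * w)) := by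
        simp only [internalMinorant]
        gcongr
    _ = 1 / k * (ρ * (Real.exp (k * t) * (1 + (k * w - k * t)))) := by ring
    _ ≤ 1 / k * (ρ * Real.exp (k * w)) := by
        gcongr
        exact exp_mul_one_add_sub_le_exp _ _

lemma isGreatest_range_internalMinorant {k ρ : ℝ} (hk : 0 < k) (hρ : 0 < ρ) (S : ℝ) :
    IsGreatest (range fun q => internalMinorant k q (ρ, S))
      (1 / k * (ρ * Real.exp (k * (Real.log ρ + S / ρ)))) := by
  constructor
  · refine ⟨(Real.log ρ + S / ρ, Real.log ρ), ?_⟩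
    simp only [internalMinorant, Real.exp_log hρ]
    field_simp
    ring
  · rintro _ ⟨q, rfl⟩
    exact internalMinorant_le hk hρ q S

lemma exists_le_internalMinorant {k ρ S : ℝ} (hk : 0 < k) (hρ : ρ ≤ 0) (hne : ¬(ρ = 0 ∧ S ≤ 0))
    (N : ℝ) : ∃ q, N ≤ internalMinorant k q (ρ, S) := by
  rcases hρ.lt_or_eq with hneg | rfl
  · -- `ρ * u` tends to `+∞` as `u → -∞`, while `exp u ≤ 1` for `u ≤ 0`.
    set b := (N - ρ / k - S - ρ + 1) / ρ
    refine ⟨(0, min 0 b), ?_⟩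
    have hexp : Real.exp (min 0 b) ≤ 1 := Real.exp_le_one_iff.2 (min_le_left _ _)
    have hmul : N - ρ / k - S - ρ + 1 ≤ ρ * min 0 b :=
      calc N - ρ / k - S - ρ + 1 = ρ * b := (mul_div_cancel₀ _ hneg.ne).symm
        _ ≤ ρ * min 0 b := mul_le_mul_of_nonpos_left (min_le_right _ _) hneg.le
    have hvalue : internalMinorant k (0, min 0 b) (ρ, S) =
        ρ / k + (S + (ρ * (1 + min 0 b) - Real.exp (min 0 b))) := by
      simp only [internalMinorant, mul_zero, Real.exp_zero, sub_zero, mul_one]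
      field_simp
    linarith
  · -- With `exp u = S / 2` the minorant is `exp (k * t) * (S / 2)`, unbounded in `t`.
    have hS : 0 < S := by simpa using hne
    refine ⟨(2 * N / (S * k), Real.log (S / 2)), ?_⟩
    have hvalue : internalMinorant k (2 * N / (S * k), Real.log (S / 2)) (0, S) =
        Real.exp (k * (2 * N / (S * k))) * (S / 2) := by
      simp only [internalMinorant, Real.exp_log (half_pos hS)]
      field_simp
      ring
    calc N ≤ (k * (2 * N / (S * k)) + 1) * (S / 2) := by
          have : (k * (2 * N / (S * k)) + 1) * (S / 2) = N + S / 2 := by field_simp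
          linarith
      _ ≤ Real.exp (k * (2 * N / (S * k))) * (S / 2) := by
          gcongr
          exact Real.add_one_le_exp _
      _ = _ := hvalue.symm

lemma internalMinorant_zero_nonpos {k S : ℝ} (hk : 0 < k) (hS : S ≤ 0) (q : ℝ × ℝ) :
    internalMinorant k q (0, S) ≤ 0 := by
  have hvalue : internalMinorant k q (0, S) =
      Real.exp (k * q.1) * (S - Real.exp q.2) := by
    simp only [internalMinorant]
    field_simp
    ring
  rw [hvalue]
  exact mul_nonpos_of_nonneg_of_nonpos (Real.exp_nonneg _)
    (sub_nonpos.2 (hS.trans (Real.exp_nonneg _)))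

lemma internalEnergy_eq_iSup {γ : ℝ} (hγ : 1 < γ) :
    internalEnergy γ = fun p => ⨆ q, ENNReal.ofReal (internalMinorant (γ - 1) q p) := by
  have hk : 0 < γ - 1 := sub_pos.2 hγ
  funext ⟨ρ, S⟩
  simp only [internalEnergy]
  split_ifs with hpos hvacuum
  · have hvalue := rpow_mul_exp_div_eq (k := γ - 1) hpos S
    rw [sub_add_cancel] at hvalue
    rw [mul_assoc, hvalue]
    exact (iSup_ofReal_eq_of_isGreatest (isGreatest_range_internalMinorant hk hpos S)).symm
  · obtain ⟨rfl, hS⟩ := hvacuum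
    exact (iSup_ofReal_eq_zero (internalMinorant_zero_nonpos hk hS)).symm
  · exact (iSup_ofReal_eq_top (exists_le_internalMinorant hk (not_lt.1 hpos) hvacuum)).symm

lemma convexOn_internalEnergy {γ : ℝ} (hγ : 1 < γ) : ConvexOn ℝ≥0 univ (internalEnergy γ) := by
  rw [internalEnergy_eq_iSup hγ]
  exact convexOn_iSup_ofReal (convexOn_internalMinorant _)

lemma lowerSemicontinuous_internalEnergy {γ : ℝ} (hγ : 1 < γ) :
    LowerSemicontinuous (internalEnergy γ) := by
  rw [internalEnergy_eq_iSup hγ]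
  exact lowerSemicontinuous_iSup_ofReal (continuous_internalMinorant _)

end InternalEnergy

section TotalEnergy

variable {H : Type*} [NormedAddCommGroup H]

lemma kineticEnergy_add_internalEnergy {γ : ℝ} (hγ : 1 < γ) (p : ℝ × H × ℝ) :
    kineticEnergy (p.1, p.2.1) + internalEnergy γ (p.1, p.2.2) =
      if 0 < p.1 then
        ENNReal.ofReal (‖p.2.1‖ ^ 2 / (2 * p.1) +
          (1 / (γ - 1)) * p.1 ^ γ * Real.exp (p.2.2 / ((1 / (γ - 1)) * p.1)))
      else if p.1 = 0 ∧ p.2.1 = 0 ∧ p.2.2 ≤ 0 then 0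
      else ⊤ := by
  obtain ⟨ρ, m, S⟩ := p
  by_cases hρ : 0 < ρ
  · have hcv : 0 ≤ 1 / (γ - 1) := one_div_nonneg.2 (sub_nonneg.2 hγ.le)
    simp only [kineticEnergy, internalEnergy, if_pos hρ]
    exact (ENNReal.ofReal_add (by positivity)
      (mul_nonneg (mul_nonneg hcv (Real.rpow_nonneg hρ.le γ)) (Real.exp_nonneg _))).symm
  · by_cases hzero : ρ = 0 <;> by_cases hm : m = 0 <;> by_cases hS : S ≤ 0 <;>
      simp [kineticEnergy, internalEnergy, hρ, hzero, hm, hS]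

theorem totalEnergy_convex_lowerSemicontinuous_general [InnerProductSpace ℝ H] {γ : ℝ}
    (hγ : 1 < γ) :
    ConvexOn ℝ≥0 univ
      (fun p : ℝ × H × ℝ => kineticEnergy (p.1, p.2.1) + internalEnergy γ (p.1, p.2.2)) ∧
    LowerSemicontinuous
      (fun p : ℝ × H × ℝ => kineticEnergy (p.1, p.2.1) + internalEnergy γ (p.1, p.2.2)) := by
  let densityMomentum : ℝ × H × ℝ →ₗ[ℝ≥0] ℝ × H :=
    .prod (.fst _ _ _) (.fst _ _ _ ∘ₗ .snd _ _ _)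
  let densityEntropy : ℝ × H × ℝ →ₗ[ℝ≥0] ℝ × ℝ :=
    .prod (.fst _ _ _) (.snd _ _ _ ∘ₗ .snd _ _ _)
  constructor
  · have hkinetic : ConvexOn ℝ≥0 univ (kineticEnergy ∘ densityMomentum) :=
      (convexOn_kineticEnergy (H := H)).comp_linearMap densityMomentum
    have hinternal : ConvexOn ℝ≥0 univ (internalEnergy γ ∘ densityEntropy) :=
      (convexOn_internalEnergy hγ).comp_linearMap densityEntropy
    exact hkinetic.add hinternal
  · have hmomentum : Continuous fun p : ℝ × H × ℝ => (p.1, p.2.1) := by fun_prop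
    have hentropy : Continuous fun p : ℝ × H × ℝ => (p.1, p.2.2) := by fun_prop
    exact (lowerSemicontinuous_kineticEnergy.comp hmomentum).add
      ((lowerSemicontinuous_internalEnergy hγ).comp hentropy)

end TotalEnergy

lemma totalEnergy_eq_kineticEnergy_add_internalEnergy (d : ℕ) {γ : ℝ} (hγ : 1 < γ) :
    totalEnergy d γ = fun p => kineticEnergy (p.1, p.2.1) + internalEnergy γ (p.1, p.2.2) := by
  funext p
  rw [kineticEnergy_add_internalEnergy hγ, totalEnergy]
  -- The two sides differ only in their `Decidable` instances.
  congr!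

/-- the extended total energy is convex and lower semicontinuous on `ℝ^{d+2}`. -/
theorem totalEnergy_convex_lowerSemicontinuous (d : ℕ) (hd : 1 ≤ d) (γ : ℝ) (hγ : 1 < γ) :
    (∀ x y : ℝ × EuclideanSpace ℝ (Fin d) × ℝ, ∀ a : ℝ, 0 ≤ a → a ≤ 1 →
      totalEnergy d γ (a • x + (1 - a) • y) ≤
        ENNReal.ofReal a * totalEnergy d γ x + ENNReal.ofReal (1 - a) * totalEnergy d γ y) ∧
    LowerSemicontinuous (totalEnergy d γ) := by
  rw [totalEnergy_eq_kineticEnergy_add_internalEnergy d hγ]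
  exact totalEnergy_convex_lowerSemicontinuous_general hγ |>.imp_left fun hconvex x y _ =>
    le_ofReal_mul_add_of_convexOn hconvex x y
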